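/- arXiv:1605.05094 — 3 statements merged into one kernel-verified Lean document; each statement's English description precedes it below -/
import Mathlib

section
/- (Mazur–Orlicz theorem) Let Z be a nonzero real vector space, let ρ : Z → ℝ be sublinear, and let D be a nonempty convex subset of Z. Then there exists a linear functional L : Z → ℝ such that L(z) ≤ ρ(z) for all z ∈ Z and inf_{z ∈ D} L(z) = inf_{z ∈ D} ρ(z) (an equality of infima in the extended real numbers). -/
/-!
Let `β` be a real lower bound of `ρ` on `D`, or more generally a concave function below `ρ` on `D`.
The epigraph of `ρ` is a convex cone in `Z × ℝ`; subtract from it the cone generated by the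
hypograph of `β`. As this hypograph is convex, its cone consists of multiples of single points and
so stays below the graph of `ρ`. Hence the difference meets `{0} × ℝ` only in nonnegative heights,
and by the M. Riesz extension theorem the height on `{0} × ℝ` extends to a linear functional
`(z, r) ↦ r - L z` that is nonnegative on the difference: `L ≤ ρ` everywhere and `β ≤ L` on `D`.
-/

section ConvexHull

variable {𝕜 E : Type*} [Field 𝕜] [LinearOrder 𝕜] [IsStrictOrderedRing 𝕜] [AddCommGroup E]
  [Module 𝕜 E]

theorem exists_smul_eq_of_mem_hull_of_convex {s : Set E} (hs : Convex 𝕜 s) (hne : s.Nonempty)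
    {x : E} (hx : x ∈ PointedCone.hull 𝕜 s) : ∃ t : 𝕜, 0 ≤ t ∧ ∃ y ∈ s, t • y = x := by
  induction hx using Submodule.span_induction with
  | mem y hy => exact ⟨1, zero_le_one, y, hy, one_smul 𝕜 y⟩
  | zero =>
    obtain ⟨y, hy⟩ := hne
    exact ⟨0, le_rfl, y, hy, zero_smul 𝕜 y⟩
  | add _ _ _ _ hx hy =>
    obtain ⟨t, ht, x, hx, rfl⟩ := hx
    obtain ⟨u, hu, y, hy, rfl⟩ := hy
    obtain ⟨z, hz, hz_eq⟩ := hs.exists_mem_add_smul_eq hx hy ht hu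
    exact ⟨t + u, add_nonneg ht hu, z, hz, hz_eq⟩
  | smul c _ _ hx =>
    obtain ⟨t, ht, y, hy, rfl⟩ := hx
    exact ⟨c * t, mul_nonneg c.2 ht, y, hy, mul_smul (c : 𝕜) t y⟩

end ConvexHull

section Sublinear

variable {Z : Type*} [AddCommGroup Z] [Module ℝ Z] {ρ : Z → ℝ}

/-- A sublinear functional, i.e. a subadditive and positively homogeneous real-valued map. -/
structure IsSublinear (ρ : Z → ℝ) : Prop where
  add_le (x y : Z) : ρ (x + y) ≤ ρ x + ρ y
  smul_eq (c : ℝ) (hc : 0 ≤ c) (x : Z) : ρ (c • x) = c * ρ x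

namespace IsSublinear

theorem map_zero (hρ : IsSublinear ρ) : ρ 0 = 0 := by
  simpa only [zero_smul, zero_mul] using hρ.smul_eq 0 le_rfl 0

/-- The epigraph of a sublinear functional, which is a pointed convex cone in `Z × ℝ`. -/
def epigraph (hρ : IsSublinear ρ) : PointedCone ℝ (Z × ℝ) where
  carrier := {p | ρ p.1 ≤ p.2}
  zero_mem' := hρ.map_zero.le
  add_mem' {p q} hp hq := (hρ.add_le p.1 q.1).trans (add_le_add hp hq)
  smul_mem' c p hp := (hρ.smul_eq c c.2 p.1).trans_le (mul_le_mul_of_nonneg_left hp c.2)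

theorem mem_epigraph (hρ : IsSublinear ρ) {p : Z × ℝ} : p ∈ hρ.epigraph ↔ ρ p.1 ≤ p.2 :=
  Iff.rfl

open scoped Pointwise in
theorem snd_nonneg_of_mem_epigraph_sup_neg (hρ : IsSublinear ρ) {C : PointedCone ℝ (Z × ℝ)}
    (hC : ∀ p ∈ C, p.2 ≤ ρ p.1) {q : Z × ℝ} (hq : q ∈ hρ.epigraph ⊔ -C) (hq₁ : q.1 = 0) :
    0 ≤ q.2 := by
  obtain ⟨e, he, c, hc, rfl⟩ := Submodule.mem_sup.1 hq
  have he₁ : e.1 = (-c).1 := eq_neg_of_add_eq_zero_left hq₁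
  have hce : -c.2 ≤ e.2 := calc
    (-c).2 ≤ ρ (-c).1 := hC (-c) hc
    _ = ρ e.1 := by rw [he₁]
    _ ≤ e.2 := he
  exact neg_le_iff_add_nonneg.1 hce

open scoped Pointwise in
theorem exists_linearMap_le_of_pointedCone (hρ : IsSublinear ρ) (C : PointedCone ℝ (Z × ℝ))
    (hC : ∀ p ∈ C, p.2 ≤ ρ p.1) :
    ∃ L : Z →ₗ[ℝ] ℝ, (∀ z, L z ≤ ρ z) ∧ ∀ p ∈ C, p.2 ≤ L p.1 := by
  let height : (Z × ℝ) →ₗ.[ℝ] ℝ := (LinearMap.snd ℝ Z ℝ).toPMap (Submodule.prod ⊥ ⊤)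
  obtain ⟨g, hg_height, hg_nonneg⟩ := riesz_extension (hρ.epigraph ⊔ -C) height
    (fun q hq => hρ.snd_nonneg_of_mem_epigraph_sup_neg hC hq q.2.1)
    (fun p => ⟨⟨(0, ρ p.1 - p.2), Submodule.zero_mem _, trivial⟩,
      Submodule.mem_sup_left (hρ.mem_epigraph.2 (by simp))⟩)
  let L : Z →ₗ[ℝ] ℝ := -g ∘ₗ LinearMap.inl ℝ Z ℝ
  have hg (p : Z × ℝ) : g p = p.2 - L p.1 := by
    have hg_snd : g (0, p.2) = p.2 := hg_height ⟨(0, p.2), Submodule.zero_mem _, trivial⟩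
    calc
      g p = g (p.1, 0) + g (0, p.2) := by rw [← map_add, Prod.fst_add_snd]
      _ = p.2 - L p.1 := by simp [L, hg_snd, add_comm]
  refine ⟨L, fun z => ?_, fun p hp => ?_⟩
  · have hz : 0 ≤ g (z, ρ z) := hg_nonneg _ (Submodule.mem_sup_left (hρ.mem_epigraph.2 le_rfl))
    rwa [hg, sub_nonneg] at hz
  · have hp : 0 ≤ g (-p) :=
      hg_nonneg _ (Submodule.mem_sup_right (Submodule.mem_neg.2 ((neg_neg p).symm ▸ hp)))
    rwa [map_neg, hg, neg_sub, sub_nonneg] at hp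

theorem exists_linearMap_le (hρ : IsSublinear ρ) : ∃ L : Z →ₗ[ℝ] ℝ, ∀ z, L z ≤ ρ z := by
  obtain ⟨L, hL, -⟩ := hρ.exists_linearMap_le_of_pointedCone ⊥ fun p hp => by
    rw [(Submodule.mem_bot _).1 hp]
    exact hρ.map_zero.ge
  exact ⟨L, hL⟩

theorem exists_linearMap_between_of_concaveOn (hρ : IsSublinear ρ) {D : Set Z} {f : Z → ℝ}
    (hf : ConcaveOn ℝ D f) (hfρ : ∀ d ∈ D, f d ≤ ρ d) :
    ∃ L : Z →ₗ[ℝ] ℝ, (∀ z, L z ≤ ρ z) ∧ ∀ d ∈ D, f d ≤ L d := by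
  rcases D.eq_empty_or_nonempty with rfl | ⟨d₀, hd₀⟩
  · simpa using hρ.exists_linearMap_le
  let hypograph : Set (Z × ℝ) := {p | p.1 ∈ D ∧ p.2 ≤ f p.1}
  have hhull : ∀ p ∈ PointedCone.hull ℝ hypograph, p.2 ≤ ρ p.1 := by
    intro p hp
    obtain ⟨t, ht, q, ⟨hqD, hqf⟩, rfl⟩ :=
      exists_smul_eq_of_mem_hull_of_convex hf.convex_hypograph ⟨(d₀, f d₀), hd₀, le_rfl⟩ hp
    calc
      t * q.2 ≤ t * ρ q.1 := mul_le_mul_of_nonneg_left (hqf.trans (hfρ q.1 hqD)) ht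
      _ = ρ (t • q.1) := (hρ.smul_eq t ht q.1).symm
  obtain ⟨L, hLρ, hL⟩ := hρ.exists_linearMap_le_of_pointedCone _ hhull
  exact ⟨L, hLρ, fun d hd => hL (d, f d) (PointedCone.subset_hull ⟨hd, le_rfl⟩)⟩

end IsSublinear

end Sublinear

/-- **Mazur–Orlicz theorem.** Let `Z` be a nonzero real vector space, `ρ : Z → ℝ`
sublinear (subadditive and positively homogeneous) and `D` a nonempty convex subset
of `Z`.  Then there is a linear functional `L` on `Z` with `L z ≤ ρ z` for all `z`
and `⨅_{z ∈ D} L z = ⨅_{z ∈ D} ρ z` (infima taken in the extended reals). -/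
theorem mazur_orlicz {Z : Type*} [AddCommGroup Z] [Module ℝ Z] [Nontrivial Z]
    (ρ : Z → ℝ)
    (hsub : ∀ x y : Z, ρ (x + y) ≤ ρ x + ρ y)
    (hhom : ∀ c : ℝ, 0 ≤ c → ∀ x : Z, ρ (c • x) = c * ρ x)
    (D : Set Z) (hD : D.Nonempty) (hconv : Convex ℝ D) :
    ∃ L : Z →ₗ[ℝ] ℝ, (∀ z : Z, L z ≤ ρ z) ∧
      (⨅ z ∈ D, (L z : EReal)) = ⨅ z ∈ D, (ρ z : EReal) := by
  have hρ : IsSublinear ρ := ⟨hsub, hhom⟩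
  suffices ∃ L : Z →ₗ[ℝ] ℝ, (∀ z, L z ≤ ρ z) ∧ ∀ d ∈ D, (⨅ z ∈ D, (ρ z : EReal)) ≤ L d by
    obtain ⟨L, hLρ, hL⟩ := this
    exact ⟨L, hLρ, le_antisymm (iInf₂_mono fun z _ => EReal.coe_le_coe (hLρ z)) (le_iInf₂ hL)⟩
  have hinf : ∀ d ∈ D, (⨅ z ∈ D, (ρ z : EReal)) ≤ ρ d := fun d hd => iInf₂_le d hd
  generalize (⨅ z ∈ D, (ρ z : EReal)) = m at hinf ⊢
  induction m with
  | bot =>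
    obtain ⟨L, hLρ⟩ := hρ.exists_linearMap_le
    exact ⟨L, hLρ, fun _ _ => bot_le⟩
  | coe β =>
    simp only [EReal.coe_le_coe_iff] at hinf ⊢
    exact hρ.exists_linearMap_between_of_concaveOn (concaveOn_const β hconv) hinf
  | top =>
    obtain ⟨d, hd⟩ := hD
    exact absurd (top_le_iff.1 (hinf d hd)) (EReal.coe_ne_top _)
end

section
/- There exists a linear functional Q_α : 𝒳 → ℝ dominated by E_υ such that sup_{X ∈ 𝒳_α} Q_α(X) = sup_{X ∈ 𝒳_α} E_ῡ[X]; moreover, every linear functional Q_α dominated by E_υ satisfying this equality has Q_α(1) = 1, where 1 denotes the constant function one. -/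
open MeasureTheory Filter Topology
open scoped ENNReal

/-- `X` belongs to the space `𝒳` of bounded measurable real-valued functions on `Ω`. -/
def MemX {Ω : Type*} [MeasurableSpace Ω] (X : Ω → ℝ) : Prop :=
  Measurable X ∧ ∃ M : ℝ, ∀ ω, |X ω| ≤ M

/-- A sublinear operator on `𝒳`: monotone, constant preserving, subadditive and
positively homogeneous. -/
def IsSublinearOp {Ω : Type*} [MeasurableSpace Ω] (ρ : (Ω → ℝ) → ℝ) : Prop :=
  (∀ X Y : Ω → ℝ, MemX X → MemX Y → (∀ ω, Y ω ≤ X ω) → ρ Y ≤ ρ X) ∧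
  (∀ c : ℝ, ρ (fun _ => c) = c) ∧
  (∀ X Y : Ω → ℝ, MemX X → MemX Y → ρ (X + Y) ≤ ρ X + ρ Y) ∧
  (∀ c : ℝ, 0 ≤ c → ∀ X : Ω → ℝ, MemX X → ρ (c • X) = c * ρ X)

/-- A linear functional on `𝒳`. -/
def IsLinearOp {Ω : Type*} [MeasurableSpace Ω] (L : (Ω → ℝ) → ℝ) : Prop :=
  (∀ X Y : Ω → ℝ, MemX X → MemX Y → L (X + Y) = L X + L Y) ∧
  (∀ (c : ℝ) (X : Ω → ℝ), MemX X → L (c • X) = c * L X)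

/-- `L` is dominated by `ρ` on `𝒳`. -/
def Dominated {Ω : Type*} [MeasurableSpace Ω] (L ρ : (Ω → ℝ) → ℝ) : Prop :=
  ∀ X : Ω → ℝ, MemX X → L X ≤ ρ X

/-- The conjugate operator `E_ῡ[X] := -E_υ[-X]`. -/
def conjOp {Ω : Type*} (ρ : (Ω → ℝ) → ℝ) : (Ω → ℝ) → ℝ := fun X => -ρ (-X)

/-- The set `𝒳_α` of test functions at significance level `α`. -/
def testSet {Ω : Type*} [MeasurableSpace Ω] (Emu : (Ω → ℝ) → ℝ) (α : ℝ) : Set (Ω → ℝ) :=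
  {X | MemX X ∧ (∀ ω, 0 ≤ X ω ∧ X ω ≤ 1) ∧ Emu X ≤ α}

/-!
On `𝒳_α` the functional sought must satisfy `Q ≤ s := sup E_ῡ`, while `Q ≤ E_υ` already forces
`E_ῡ ≤ Q`. Since `-s ≤ E_υ` on the convex set `-𝒳_α`, a linear functional can be inserted between
the constant `-s` there and the sublinear `E_υ`. This is the Hahn–Banach sandwich theorem, obtained
from the M. Riesz extension theorem in `𝒳 × ℝ` for the sum of the epigraph of the sublinear function
and the negative of the cone spanned by the hypograph of the concave one. The total mass is pinned
by testing `Q ≤ E_υ` on the constants `1` and `-1`.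
-/

section Sandwich

open scoped Pointwise

theorem eq_zero_or_mem_convexConeHull_of_mem_pointedConeHull {R M : Type*} [Semiring R]
    [PartialOrder R] [IsOrderedRing R] [AddCommMonoid M] [Module R M] {s : Set M} {x : M}
    (hx : x ∈ PointedCone.hull R s) : x = 0 ∨ x ∈ ConvexCone.hull R s := by
  induction hx using Submodule.span_induction with
  | mem x hx => exact .inr (ConvexCone.subset_hull hx)
  | zero => exact .inl rfl
  | add x y _ _ hx hy =>
    rcases hx with rfl | hx
    · simpa using hy
    rcases hy with rfl | hy
    · simpa using Or.inr hx
    exact .inr (add_mem hx hy)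
  | smul c x _ hx =>
    rcases hx with rfl | hx
    · exact .inl (smul_zero c)
    rcases c.2.eq_or_lt with hc | hc
    · obtain rfl : c = 0 := Subtype.ext hc.symm
      exact .inl (zero_smul _ x)
    · exact .inr (ConvexCone.smul_mem _ hc hx)

variable {E : Type*} [AddCommGroup E] [Module ℝ E] {p : E → ℝ}

theorem map_zero_of_forall_pos_map_smul (p_hom : ∀ c : ℝ, 0 < c → ∀ x, p (c • x) = c * p x) :
    p 0 = 0 := by
  have h := p_hom 2 two_pos 0
  rw [smul_zero] at h
  linarith

/-- The epigraph of a sublinear function `p`, as a pointed cone in `E × ℝ`. A linear functional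
that is nonnegative on it and sends `(0, r)` to `r` is `(x, r) ↦ r - L x` for a linear `L ≤ p`,
which turns domination by `p` into the positivity of the M. Riesz extension theorem. -/
def epigraphCone (p : E → ℝ) (p_hom : ∀ c : ℝ, 0 < c → ∀ x, p (c • x) = c * p x)
    (p_add : ∀ x y, p (x + y) ≤ p x + p y) : PointedCone ℝ (E × ℝ) where
  carrier := {z | p z.1 ≤ z.2}
  zero_mem' := (map_zero_of_forall_pos_map_smul p_hom).le
  add_mem' hz hw := (p_add _ _).trans (add_le_add hz hw)
  smul_mem' := by
    rintro c z (hz : p z.1 ≤ z.2)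
    rcases eq_zero_or_pos c with rfl | hc
    · simp [map_zero_of_forall_pos_map_smul p_hom]
    · exact (p_hom c hc z.1).trans_le (mul_le_mul_of_nonneg_left hz c.2)

theorem exists_linearMap_between_pointedCone_sublinear
    (p_hom : ∀ c : ℝ, 0 < c → ∀ x, p (c • x) = c * p x)
    (p_add : ∀ x y, p (x + y) ≤ p x + p y) {C : PointedCone ℝ (E × ℝ)}
    (hC : ∀ a ∈ C, a.2 ≤ p a.1) :
    ∃ L : E →ₗ[ℝ] ℝ, (∀ x, L x ≤ p x) ∧ ∀ a ∈ C, a.2 ≤ L a.1 := by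
  let P := epigraphCone p p_hom p_add
  let f : E × ℝ →ₗ.[ℝ] ℝ := (LinearMap.snd ℝ E ℝ).toPMap (Submodule.prod ⊥ ⊤)
  have f_nonneg : ∀ z : f.domain, (z : E × ℝ) ∈ P ⊔ -C → 0 ≤ f z := by
    rintro ⟨z, hz⟩ hzC
    obtain ⟨u, hu, v, hv, rfl⟩ := Submodule.mem_sup.1 hzC
    have hfst : u.1 = (-v).1 := eq_neg_of_add_eq_zero_left hz.1
    have hu' : p u.1 ≤ u.2 := hu
    have hv' : -v.2 ≤ p u.1 := hfst ▸ hC (-v) hv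
    change 0 ≤ u.2 + v.2
    linarith
  have f_cofinal : ∀ y : E × ℝ, ∃ z : f.domain, (z : E × ℝ) + y ∈ P ⊔ -C := fun y ↦
    ⟨⟨(0, p y.1 - y.2), rfl, trivial⟩, Submodule.mem_sup_left <| by
      change p (0 + y.1) ≤ p y.1 - y.2 + y.2
      rw [zero_add, sub_add_cancel]⟩
  obtain ⟨g, hgf, hg⟩ := riesz_extension (P ⊔ -C) f f_nonneg f_cofinal
  have g_apply (x : E) (r : ℝ) : g (x, r) = r + g (x, 0) := by
    have hr : g (0, r) = r := hgf ⟨(0, r), rfl, trivial⟩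
    rw [← hr, ← map_add, hr, Prod.mk_add_mk, zero_add, add_zero]
  refine ⟨-g ∘ₗ LinearMap.inl ℝ E ℝ, fun x ↦ ?_, fun a ha ↦ ?_⟩
  · have h := hg (x, p x) (Submodule.mem_sup_left (le_refl (p x)))
    rw [g_apply] at h
    exact neg_le_iff_add_nonneg.2 h
  · have h := hg (-a) (Submodule.mem_sup_right (Submodule.mem_neg.2 ((neg_neg a).symm ▸ ha)))
    rw [map_neg, ← Prod.mk.eta (p := a), g_apply] at h
    change a.2 ≤ -g (a.1, 0)
    linarith

theorem exists_linearMap_between_concaveOn_sublinear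
    (p_hom : ∀ c : ℝ, 0 < c → ∀ x, p (c • x) = c * p x)
    (p_add : ∀ x y, p (x + y) ≤ p x + p y) {K : Set E} {q : E → ℝ} (hq : ConcaveOn ℝ K q)
    (hqp : ∀ x ∈ K, q x ≤ p x) :
    ∃ L : E →ₗ[ℝ] ℝ, (∀ x, L x ≤ p x) ∧ ∀ x ∈ K, q x ≤ L x := by
  let H : Set (E × ℝ) := {a | a.1 ∈ K ∧ a.2 ≤ q a.1}
  have hull_le : ∀ a ∈ PointedCone.hull ℝ H, a.2 ≤ p a.1 := by
    intro a ha
    rcases eq_zero_or_mem_convexConeHull_of_mem_pointedConeHull ha with rfl | ha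
    · exact (map_zero_of_forall_pos_map_smul p_hom).ge
    obtain ⟨c, hc, b, ⟨hbK, hbq⟩, rfl⟩ := (ConvexCone.mem_hull_of_convex hq.convex_hypograph).1 ha
    exact (mul_le_mul_of_nonneg_left (hbq.trans (hqp _ hbK)) hc.le).trans_eq (p_hom c hc b.1).symm
  obtain ⟨L, hLp, hL⟩ := exists_linearMap_between_pointedCone_sublinear p_hom p_add hull_le
  exact ⟨L, hLp, fun x hx ↦ hL (x, q x) (PointedCone.subset_hull ⟨hx, le_rfl⟩)⟩

/-- The Mazur–Orlicz theorem for `-K`. -/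
theorem exists_linearMap_le_sublinear_isLUB_image
    (p_hom : ∀ c : ℝ, 0 < c → ∀ x, p (c • x) = c * p x)
    (p_add : ∀ x y, p (x + y) ≤ p x + p y) {K : Set E} (hK : Convex ℝ K) {s : ℝ}
    (hs : IsLUB ((fun x ↦ -p (-x)) '' K) s) :
    ∃ L : E →ₗ[ℝ] ℝ, (∀ x, L x ≤ p x) ∧ IsLUB (L '' K) s := by
  have le_p : ∀ x ∈ -K, -s ≤ p x := fun x hx ↦ by
    simpa using neg_le_neg (hs.1 ⟨-x, hx, rfl⟩)
  obtain ⟨L, hLp, hL⟩ :=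
    exists_linearMap_between_concaveOn_sublinear p_hom p_add (concaveOn_const (-s) hK.neg) le_p
  have le_L (x : E) : -p (-x) ≤ L x := by simpa using neg_le_neg (hLp (-x))
  refine ⟨L, hLp, ?_, fun b hb ↦ hs.2 ?_⟩
  · rintro _ ⟨x, hx, rfl⟩
    simpa using hL (-x) (Set.neg_mem_neg.2 hx)
  · rintro _ ⟨x, hx, rfl⟩
    exact (le_L x).trans (hb ⟨x, hx, rfl⟩)

end Sandwich

section Operators

variable {Ω : Type*} [MeasurableSpace Ω]

theorem MemX.const (c : ℝ) : MemX (fun _ : Ω ↦ c) :=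
  ⟨measurable_const, |c|, fun _ ↦ le_rfl⟩

theorem MemX.add {X Y : Ω → ℝ} (hX : MemX X) (hY : MemX Y) : MemX (X + Y) := by
  obtain ⟨hXm, M, hM⟩ := hX
  obtain ⟨hYm, N, hN⟩ := hY
  exact ⟨hXm.add hYm, M + N, fun ω ↦ (abs_add_le _ _).trans (add_le_add (hM ω) (hN ω))⟩

theorem MemX.smul {X : Ω → ℝ} (c : ℝ) (hX : MemX X) : MemX (c • X) := by
  obtain ⟨hXm, M, hM⟩ := hX
  refine ⟨hXm.const_smul c, |c| * M, fun ω ↦ ?_⟩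
  rw [Pi.smul_apply, smul_eq_mul, abs_mul]
  exact mul_le_mul_of_nonneg_left (hM ω) (abs_nonneg c)

variable (Ω) in
/-- The space `𝒳` as a subspace of the space of all functions, so that the vector-space form of
the Hahn–Banach theorem applies to operators on it. -/
def spaceX : Submodule ℝ (Ω → ℝ) where
  carrier := {X | MemX X}
  zero_mem' := .const 0
  add_mem' := .add
  smul_mem' c _ := .smul c

theorem MemX.neg {X : Ω → ℝ} (hX : MemX X) : MemX (-X) :=
  (spaceX Ω).neg_mem hX

theorem IsLinearOp.apply_const_of_dominated {Q ρ : (Ω → ℝ) → ℝ} (hQ : IsLinearOp Q)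
    (hQρ : Dominated Q ρ) (hρ : IsSublinearOp ρ) (c : ℝ) : Q (fun _ ↦ c) = c := by
  have hle (d : ℝ) : Q (fun _ ↦ d) ≤ d := (hQρ _ (.const d)).trans_eq (hρ.2.1 d)
  have hneg : Q (fun _ ↦ -c) = -Q (fun _ ↦ c) := by
    simpa [Pi.neg_def] using hQ.2 (-1) _ (.const c)
  linarith [hle c, hle (-c)]

theorem IsSublinearOp.exists_isLinearOp_dominated_isLUB_image {ρ : (Ω → ℝ) → ℝ}
    (hρ : IsSublinearOp ρ) {K : Set (Ω → ℝ)} (hKX : ∀ X ∈ K, MemX X) (hK : Convex ℝ K) {s : ℝ}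
    (hs : IsLUB (conjOp ρ '' K) s) :
    ∃ Q : (Ω → ℝ) → ℝ, IsLinearOp Q ∧ Dominated Q ρ ∧ IsLUB (Q '' K) s := by
  let K' : Set (spaceX Ω) := (spaceX Ω).subtype ⁻¹' K
  have image_K' : (spaceX Ω).subtype '' K' = K :=
    Set.image_preimage_eq_of_subset fun X hX ↦ ⟨⟨X, hKX X hX⟩, rfl⟩
  have image_eq (F : (Ω → ℝ) → ℝ) : (fun X : spaceX Ω ↦ F X) '' K' = F '' K := by
    conv_rhs => rw [← image_K', Set.image_image]
    rfl
  obtain ⟨L, hLρ, hL⟩ := exists_linearMap_le_sublinear_isLUB_image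
    (p := fun X : spaceX Ω ↦ ρ X) (fun c hc X ↦ hρ.2.2.2 c hc.le X X.2)
    (fun X Y ↦ hρ.2.2.1 X Y X.2 Y.2) (hK.linear_preimage (spaceX Ω).subtype)
    ((image_eq (conjOp ρ)).symm ▸ hs)
  obtain ⟨Q, rfl⟩ := L.exists_extend
  exact ⟨Q, ⟨fun X Y _ _ ↦ map_add Q X Y, fun c X _ ↦ map_smul Q c X⟩,
    fun X hX ↦ hLρ ⟨X, hX⟩, image_eq Q ▸ hL⟩

theorem IsSublinearOp.conjOp_le {ρ : (Ω → ℝ) → ℝ} (hρ : IsSublinearOp ρ) {X : Ω → ℝ}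
    (hX : MemX X) {c : ℝ} (hXc : ∀ ω, X ω ≤ c) : conjOp ρ X ≤ c := by
  have h := hρ.1 (-X) (fun _ ↦ -c) hX.neg (.const _) fun ω ↦ neg_le_neg (hXc ω)
  rw [hρ.2.1] at h
  exact neg_le.1 h

theorem IsSublinearOp.bddAbove_conjOp_image_testSet {ρ : (Ω → ℝ) → ℝ} (hρ : IsSublinearOp ρ)
    (μ : (Ω → ℝ) → ℝ) (α : ℝ) : BddAbove (conjOp ρ '' testSet μ α) :=
  ⟨1, Set.forall_mem_image.2 fun _ hX ↦ hρ.conjOp_le hX.1 fun ω ↦ (hX.2.1 ω).2⟩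

theorem IsSublinearOp.convex_testSet {μ : (Ω → ℝ) → ℝ} (hμ : IsSublinearOp μ) (α : ℝ) :
    Convex ℝ (testSet μ α) := by
  rintro X ⟨hX, hX01, hXα⟩ Y ⟨hY, hY01, hYα⟩ a b ha hb hab
  refine ⟨(hX.smul a).add (hY.smul b),
    fun ω ↦ convex_Icc (0 : ℝ) 1 (hX01 ω) (hY01 ω) ha hb hab, ?_⟩
  calc μ (a • X + b • Y)
      ≤ μ (a • X) + μ (b • Y) := hμ.2.2.1 _ _ (hX.smul a) (hY.smul b)
    _ = a * μ X + b * μ Y := by rw [hμ.2.2.2 a ha X hX, hμ.2.2.2 b hb Y hY]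
    _ ≤ α := convex_Iic α hXα hYα ha hb hab

theorem IsSublinearOp.nonempty_testSet {μ : (Ω → ℝ) → ℝ} (hμ : IsSublinearOp μ) {α : ℝ}
    (hα : 0 ≤ α) : (testSet μ α).Nonempty :=
  ⟨fun _ ↦ 0, .const 0, fun _ ↦ ⟨le_rfl, zero_le_one⟩, (hμ.2.1 0).trans_le hα⟩

theorem exists_Qalpha_and_total_mass_one_general {Eups : (Ω → ℝ) → ℝ}
    (hEups : IsSublinearOp Eups) {K : Set (Ω → ℝ)} (hKX : ∀ X ∈ K, MemX X) (hK : Convex ℝ K)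
    (hne : K.Nonempty) (hbdd : BddAbove (conjOp Eups '' K)) :
    (∃ Q : (Ω → ℝ) → ℝ, IsLinearOp Q ∧ Dominated Q Eups ∧
        sSup (Q '' K) = sSup (conjOp Eups '' K)) ∧
    ∀ Q : (Ω → ℝ) → ℝ, IsLinearOp Q → Dominated Q Eups → Q (fun _ ↦ 1) = 1 := by
  obtain ⟨Q, hQ, hQE, hQK⟩ := hEups.exists_isLinearOp_dominated_isLUB_image hKX hK
    (isLUB_csSup (hne.image _) hbdd)
  exact ⟨⟨Q, hQ, hQE, hQK.csSup_eq (hne.image Q)⟩,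
    fun Q hQ hQE ↦ hQ.apply_const_of_dominated hQE hEups 1⟩

end Operators

/-- Corollary 4.2: there is a linear functional `Q_α` dominated by `E_υ` whose
supremum over `𝒳_α` equals that of `E_ῡ`; moreover every such functional satisfies
`Q_α(1) = 1`. -/
theorem exists_Qalpha_and_total_mass_one {Ω : Type*} [MeasurableSpace Ω]
    (Emu Eups : (Ω → ℝ) → ℝ)
    (hEmu : IsSublinearOp Emu) (hEups : IsSublinearOp Eups)
    (α : ℝ) (hα0 : 0 < α) (hα1 : α < 1) :
    (∃ Q : (Ω → ℝ) → ℝ, IsLinearOp Q ∧ Dominated Q Eups ∧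
        sSup (Q '' testSet Emu α) = sSup (conjOp Eups '' testSet Emu α)) ∧
    (∀ Q : (Ω → ℝ) → ℝ, IsLinearOp Q → Dominated Q Eups →
        sSup (Q '' testSet Emu α) = sSup (conjOp Eups '' testSet Emu α) →
        Q (fun _ => 1) = 1) := by
  obtain ⟨hexists, hone⟩ := exists_Qalpha_and_total_mass_one_general hEups (fun _ hX ↦ hX.1)
    (hEmu.convex_testSet α) (hEmu.nonempty_testSet hα0.le)
    (hEups.bddAbove_conjOp_image_testSet Emu α)
  exact ⟨hexists, fun Q hQ hQE _ ↦ hone Q hQ hQE⟩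
end

section
/- Assume that every X ∈ 𝒳_α with E_μ[X] < α satisfies E_{λQ_α^c}[X] < γ_α^c. If X_α ∈ 𝒳_α satisfies E_{λQ_α^c}[X_α] = γ_α^c (i.e. X_α solves Problem (4.3)), then X_α minimizes E_μ over 𝒴_α := {Y ∈ 𝒳 : 0 ≤ Y ≤ 1, E_{λQ_α^c}[Y] ≥ γ_α^c}, i.e. E_μ[X_α] = inf_{Y ∈ 𝒴_α} E_μ[Y]. -/
open MeasureTheory Filter Topology
open scoped ENNReal

/-- A positive normalized linear functional `Qp` is *pure additive* if there is a
sequence of measurable sets `A n ↓ ∅` with `Qp(1_{A n}) → 1`. -/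
def PureAdditive {Ω : Type*} [MeasurableSpace Ω] (Qp : (Ω → ℝ) → ℝ) : Prop :=
  ∃ A : ℕ → Set Ω, (∀ n, MeasurableSet (A n)) ∧ Antitone A ∧ (⋂ n, A n) = ∅ ∧
    Tendsto (fun n => Qp ((A n).indicator fun _ => (1 : ℝ))) atTop (𝓝 1)

/-- Hypothesis (H1): for every sequence of measurable sets `A n ↓ ∅` such that
`lim E_υ[1_{A n}]` exists and is nonzero, one has `lim E_μ[1_{A n}] = 0`. -/
def HypH1 {Ω : Type*} [MeasurableSpace Ω] (Emu Eups : (Ω → ℝ) → ℝ) : Prop :=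
  ∀ A : ℕ → Set Ω, (∀ n, MeasurableSet (A n)) → Antitone A → (⋂ n, A n) = ∅ →
    ∀ l : ℝ, Tendsto (fun n => Eups ((A n).indicator fun _ => (1 : ℝ))) atTop (𝓝 l) →
      l ≠ 0 →
      Tendsto (fun n => Emu ((A n).indicator fun _ => (1 : ℝ))) atTop (𝓝 0)

/-- Hypothesis (H2): for every `X ∈ 𝒳_α` with `E_μ[X] > 0` and every positive
integer `K`, `E_μ[X] > E_μ[(X - 1/K)⁺]`. -/
def HypH2 {Ω : Type*} [MeasurableSpace Ω] (Emu : (Ω → ℝ) → ℝ) (α : ℝ) : Prop :=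
  ∀ X ∈ testSet Emu α, 0 < Emu X → ∀ K : ℕ, 0 < K →
    Emu (fun ω => max (X ω - 1 / (K : ℝ)) 0) < Emu X

/-- Hypothesis (H3): for every sequence of measurable sets `A n ↓ ∅`,
`lim E_μ[1_{A n}] < 1` and `lim E_υ[1_{A n}] < 1`. -/
def HypH3 {Ω : Type*} [MeasurableSpace Ω] (Emu Eups : (Ω → ℝ) → ℝ) : Prop :=
  ∀ A : ℕ → Set Ω, (∀ n, MeasurableSet (A n)) → Antitone A → (⋂ n, A n) = ∅ →
    (∀ l : ℝ, Tendsto (fun n => Emu ((A n).indicator fun _ => (1 : ℝ))) atTop (𝓝 l) →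
      l < 1) ∧
    (∀ l : ℝ, Tendsto (fun n => Eups ((A n).indicator fun _ => (1 : ℝ))) atTop (𝓝 l) →
      l < 1)

section ConstrainedOptimization

variable {ι β δ : Type*} [LinearOrder β] [Preorder δ] {cost : ι → β} {payoff : ι → δ}
  {s : Set ι} {a : β} {c : δ}

theorem le_cost_of_le_payoff (hstrict : ∀ x ∈ s, cost x < a → payoff x < c) {y : ι} (hy : y ∈ s)
    (hpayoff : c ≤ payoff y) : a ≤ cost y :=
  le_of_not_gt fun hlt => (hstrict y hy hlt).not_ge hpayoff

theorem isLeast_cost_image_of_le_payoff (hstrict : ∀ x ∈ s, cost x < a → payoff x < c) {x : ι}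
    (hx : x ∈ s) (hcost : cost x ≤ a) (hpayoff : c ≤ payoff x) :
    IsLeast (cost '' {y | y ∈ s ∧ c ≤ payoff y}) (cost x) := by
  refine ⟨Set.mem_image_of_mem cost ⟨hx, hpayoff⟩, Set.forall_mem_image.2 ?_⟩
  rintro y ⟨hy, hy_payoff⟩
  exact hcost.trans (le_cost_of_le_payoff hstrict hy hy_payoff)

end ConstrainedOptimization

/-- An arbitrary functional `J` takes the place of `X ↦ E_{λQ_α^c}[X]`. -/
theorem optimal_minimizes_Emu_general {Ω : Type*} [MeasurableSpace Ω] {Emu J : (Ω → ℝ) → ℝ}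
    {α γ : ℝ} (hstrict : ∀ X ∈ testSet Emu α, Emu X < α → J X < γ)
    {Xa : Ω → ℝ} (hXa : Xa ∈ testSet Emu α) (hJ : γ ≤ J Xa) :
    IsLeast (Emu '' {Y | MemX Y ∧ (∀ ω, 0 ≤ Y ω ∧ Y ω ≤ 1) ∧ γ ≤ J Y}) (Emu Xa) := by
  obtain ⟨hXa_mem, hXa_range, hXa_level⟩ := hXa
  have hstrict_tests : ∀ X ∈ {X : Ω → ℝ | MemX X ∧ ∀ ω, 0 ≤ X ω ∧ X ω ≤ 1},
      Emu X < α → J X < γ :=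
    fun X ⟨hX_mem, hX_range⟩ hlt => hstrict X ⟨hX_mem, hX_range, hlt.le⟩ hlt
  simpa only [Set.mem_ofPred_eq, and_assoc] using
    isLeast_cost_image_of_le_payoff hstrict_tests ⟨hXa_mem, hXa_range⟩ hXa_level hJ

/-- Lemma 4.6: if every `X ∈ 𝒳_α` with `E_μ[X] < α` has `E_{λQ_α^c}[X] < γ_α^c`,
then any solution `X_α` of problem (4.3) minimizes `E_μ` over
`𝒴_α = {Y ∈ 𝒳 : 0 ≤ Y ≤ 1, E_{λQ_α^c}[Y] ≥ γ_α^c}`. -/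
theorem optimal_minimizes_Emu {Ω : Type*} [MeasurableSpace Ω]
    (Emu Eups : (Ω → ℝ) → ℝ)
    (hEmu : IsSublinearOp Emu) (hEups : IsSublinearOp Eups)
    (α : ℝ) (hα0 : 0 < α) (hα1 : α < 1)
    (lam : ℝ) (hlam0 : 0 ≤ lam) (hlam1 : lam ≤ 1)
    (Qc : Measure Ω) (hQc : IsProbabilityMeasure Qc)
    (Qp : (Ω → ℝ) → ℝ) (hQplin : IsLinearOp Qp)
    (hQppos : ∀ X : Ω → ℝ, MemX X → (∀ ω, 0 ≤ X ω) → 0 ≤ Qp X)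
    (hQpone : Qp (fun _ => 1) = 1) (hQppure : PureAdditive Qp)
    (Qa : (Ω → ℝ) → ℝ) (hQalin : IsLinearOp Qa) (hQadom : Dominated Qa Eups)
    (hQasup : sSup (Qa '' testSet Emu α) = sSup (conjOp Eups '' testSet Emu α))
    (hQadec : ∀ X : Ω → ℝ, MemX X → Qa X = lam * ∫ ω, X ω ∂Qc + (1 - lam) * Qp X)
    (γ : ℝ) (hγ : γ = sSup ((fun X : Ω → ℝ => lam * ∫ ω, X ω ∂Qc) '' testSet Emu α))
    (hstrict : ∀ X ∈ testSet Emu α, Emu X < α → lam * ∫ ω, X ω ∂Qc < γ)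
    (Xa : Ω → ℝ) (hXa : Xa ∈ testSet Emu α)
    (hXopt : lam * ∫ ω, Xa ω ∂Qc = γ) :
    Emu Xa = sInf (Emu ''
      {Y : Ω → ℝ | MemX Y ∧ (∀ ω, 0 ≤ Y ω ∧ Y ω ≤ 1) ∧ γ ≤ lam * ∫ ω, Y ω ∂Qc}) :=
  (optimal_minimizes_Emu_general hstrict hXa hXopt.ge).csInf_eq.symm
end
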